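/- The R-matrix R is bijective, with inverse R⁻¹ = R + (q − q^{−1})·Id_{V⊗V}; equivalently the skein relation R − R⁻¹ = (q^{−1} − q)·Id_{V⊗V} holds (the image under the Reshetikhin–Turaev functor of the defining skein relation of the quantized oriented Brauer category). -/

import Mathlib

set_option synthInstance.maxHeartbeats 400000
set_option maxHeartbeats 1000000

noncomputable section

/-- The base field `K = ℚ(q)`. -/
abbrev K : Type := RatFunc ℚ

/-- The variable `q`. -/
def q : K := RatFunc.X

/-- The super sign `(-1)^{|i||j|}`, where the parity `|i|` of an index
`i : Fin (m+n)` (0-based) is `0` if `i < m` and `1` otherwise. -/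
def sgn (m : ℕ) {M : ℕ} (i j : Fin M) : K :=
  if m ≤ (i : ℕ) ∧ m ≤ (j : ℕ) then -1 else 1

/-- The matrix (in the standard basis of `V ⊗ V`, `V = K^{m+n}`, indices 0-based)
of the `U_q(gl(m|n))` R-matrix: `R(eᵢ ⊗ eᵢ) = q⁻¹ eᵢ ⊗ eᵢ` for `i` of parity 0,
`R(eᵢ ⊗ eᵢ) = -q eᵢ ⊗ eᵢ` for `i` of parity 1,
`R(eᵢ ⊗ eⱼ) = (-1)^{|i||j|} eⱼ ⊗ eᵢ` for `i < j`, and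
`R(eᵢ ⊗ eⱼ) = (-1)^{|i||j|} eⱼ ⊗ eᵢ + (q⁻¹ - q) eᵢ ⊗ eⱼ` for `i > j`.
Entry `(p, r)` is the coefficient of `e_{p.1} ⊗ e_{p.2}` in `R(e_{r.1} ⊗ e_{r.2})`. -/
def Rmat (m n : ℕ) :
    Matrix (Fin (m + n) × Fin (m + n)) (Fin (m + n) × Fin (m + n)) K :=
  fun p r =>
    if r.1 = r.2 then
      (if p = r then (if (r.1 : ℕ) < m then q⁻¹ else -q) else 0)
    else
      (if p.1 = r.2 ∧ p.2 = r.1 then sgn m r.1 r.2 else 0)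
        + (if r.2 < r.1 ∧ p = r then q⁻¹ - q else 0)

/-- The identity matrix on `V ⊗ V`. -/
def idVV (m n : ℕ) :
    Matrix (Fin (m + n) × Fin (m + n)) (Fin (m + n) × Fin (m + n)) K := 1

theorem q_ne_zero' : q ≠ 0 := RatFunc.X_ne_zero

def Dco (m n : ℕ) (r : Fin (m + n) × Fin (m + n)) : K :=
  if r.1 = r.2 then (if (r.1 : ℕ) < m then q⁻¹ else -q)
  else if r.2 < r.1 then q⁻¹ - q else 0

def Sco (m n : ℕ) (r : Fin (m + n) × Fin (m + n)) : K :=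
  if r.1 = r.2 then 0 else sgn m r.1 r.2

theorem Rmat_eq (m n : ℕ) (p r : Fin (m + n) × Fin (m + n)) :
    Rmat m n p r = (if p = r then Dco m n r else 0)
      + (if p = r.swap then Sco m n r else 0) := by
  obtain ⟨a, b⟩ := p
  obtain ⟨c, d⟩ := r
  simp only [Rmat, Dco, Sco, Prod.swap, Prod.mk.injEq]
  split_ifs <;> first | (simp; done) | (exact add_comm _ _) | (exfalso; omega) | (exfalso; tauto)

theorem Dco_Sco (m n : ℕ) (r : Fin (m + n) × Fin (m + n)) :
    Dco m n r * Dco m n r + Sco m n r * Sco m n r.swap = 1 + (q⁻¹ - q) * Dco m n r := by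
  have hq := q_ne_zero'
  obtain ⟨c, d⟩ := r
  have hs : sgn m c d * sgn m d c = 1 := by
    unfold sgn; split_ifs <;> first | (simp; done) | (exfalso; tauto)
  simp only [Dco, Sco, Prod.swap]
  rcases lt_trichotomy c d with h | h | h
  · simp [h.ne, h.ne', h.not_gt, hs]
  · subst h
    simp only [if_true]
    split_ifs <;> field_simp <;> ring
  · simp only [h.ne, h.ne', h, if_true, if_false, hs]
    ring

theorem Dco_Sco' (m n : ℕ) (r : Fin (m + n) × Fin (m + n)) :
    Sco m n r * Dco m n r + Sco m n r * Dco m n r.swap = (q⁻¹ - q) * Sco m n r := by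
  obtain ⟨c, d⟩ := r
  simp only [Dco, Sco, Prod.swap]
  rcases lt_trichotomy c d with h | h | h
  · simp [h.ne, h.ne', h.not_gt, h, mul_comm]
  · simp [h]
  · simp [h.ne, h.ne', h.not_gt, h, mul_comm]

theorem Rmat_sq (m n : ℕ) : Rmat m n * Rmat m n = 1 + (q⁻¹ - q) • Rmat m n := by
  ext p r
  have h1 := Dco_Sco m n r
  have h2 := Dco_Sco' m n r
  have : (Rmat m n * Rmat m n) p r
      = Rmat m n p r * Dco m n r + Rmat m n p r.swap * Sco m n r := by
    simp [Matrix.mul_apply, Rmat_eq m n _ r, mul_add, Finset.sum_add_distrib]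
  rw [this]
  simp only [Matrix.add_apply, Matrix.smul_apply, Matrix.one_apply, Rmat_eq, Prod.swap_swap,
    smul_eq_mul]
  split_ifs
  · linear_combination h1 + h2
  · linear_combination h1
  · linear_combination h2
  · ring

theorem Rmat_mul (m n : ℕ) : Rmat m n * (Rmat m n + (q - q⁻¹) • idVV m n) = 1 := by
  rw [mul_add, Rmat_sq, idVV, Matrix.mul_smul, mul_one, add_assoc, ← add_smul]
  simp

/-- The R-matrix is bijective, with inverse `R⁻¹ = R + (q - q⁻¹)·Id`;
equivalently the skein relation `R - R⁻¹ = (q⁻¹ - q)·Id` holds (the image under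
the Reshetikhin–Turaev functor of the defining skein relation of the quantized
oriented Brauer category). -/
theorem skein_relation (m n : ℕ) :
    Function.Bijective (Matrix.toLin' (Rmat m n)) ∧
    (Rmat m n)⁻¹ = Rmat m n + (q - q⁻¹) • idVV m n ∧
    Rmat m n - (Rmat m n)⁻¹ = (q⁻¹ - q) • idVV m n := by
  have h := Rmat_mul m n
  have h' := mul_eq_one_comm.mp h
  have hi : (Rmat m n)⁻¹ = Rmat m n + (q - q⁻¹) • idVV m n := Matrix.inv_eq_right_inv h
  refine ⟨?_, hi, ?_⟩
  · refine Function.bijective_iff_has_inverse.mpr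
      ⟨Matrix.toLin' (Rmat m n + (q - q⁻¹) • idVV m n), fun x => ?_, fun x => ?_⟩
    · rw [← Matrix.toLin'_mul_apply, h', Matrix.toLin'_one, LinearMap.id_apply]
    · rw [← Matrix.toLin'_mul_apply, h, Matrix.toLin'_one, LinearMap.id_apply]
  · rw [hi, ← neg_sub q, neg_smul]
    abel
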